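/- Let B = {b_1 < … < b_v} ⊆ {0,…,s−1} be nonempty with |B| = v and let t > v be an integer. Suppose λ_0, …, λ_{ns−1} are pairwise distinct and the sv × sv matrix K_{0,B} := [K_{0,b_1}^(v) | … | K_{0,b_v}^(v)] is invertible. Then there exists an st × st matrix E over F_q such that: (i) E · [K_{0,b_1}^(t) | … | K_{0,b_v}^(t)] equals the block matrix with K_{0,B} on top and the s(t−v) × sv zero matrix below; and (ii) for every index i ∈ {0,…,ns−1} with i ∉ {bs + j : b ∈ B, j ∈ {0,…,s−1}}, there is an invertible s × s matrix F_i over F_q such that E · (I_s ⊗ L_i^(t)) equals the block matrix with I_s ⊗ L_i^(v) on top and F_i ⊗ L_i^(t−v) below. -/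

import Mathlib

open Matrix

/-- The `m`-th smallest element of the finite set `B ⊆ ℕ` (junk value `0` if `m ≥ |B|`). -/
def enum (B : Finset ℕ) (m : ℕ) : ℕ := (B.sort (· ≤ ·)).getD m 0

/-- The `z`-th entry of the `(i,j)` block (a length-`t` column vector, `0 ≤ z < t`) of the
kernel matrix `K_{0,b}^{(t)}`: it is `λ_{bs+j}^z` if `i = j`, `−λ_{bs+j}^z` if `i = b ≠ j`,
and `0` otherwise. -/
def Kent {F : Type*} [Field F] (lam : ℕ → F) (s b i j z : ℕ) : F :=
  if i = j then lam (b * s + j) ^ z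
  else if i = b ∧ i ≠ j then -(lam (b * s + j) ^ z)
  else 0

/-- `K_{0,B}^{(t)} = [K_{0,b₁}^{(t)} | ⋯ | K_{0,b_v}^{(t)}]` as an `st × s|B|` matrix:
row `ρ` encodes block row `ρ / t` and inner row `ρ % t`; column `κ` selects the
`κ / s`-th member of `B` and inner column `κ % s`. -/
def KmatB {F : Type*} [Field F] (lam : ℕ → F) (s t : ℕ) (B : Finset ℕ) :
    Matrix (Fin (s * t)) (Fin (s * B.card)) F :=
  Matrix.of fun ρ κ =>
    Kent lam s (enum B ((κ : ℕ) / s)) ((ρ : ℕ) / t) ((κ : ℕ) % s) ((ρ : ℕ) % t)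

/-- The `st × s` matrix `I_s ⊗ L_i^{(t)}`. -/
def IkronL {F : Type*} [Field F] (lam : ℕ → F) (s t i : ℕ) :
    Matrix (Fin (s * t)) (Fin s) F :=
  Matrix.of fun ρ j => if (ρ : ℕ) / t = (j : ℕ) then lam i ^ ((ρ : ℕ) % t) else 0


open Polynomial in
lemma key_sum {F : Type*} [Field F] (s t : ℕ) (P : ℕ → F[X]) (hP : ∀ q < s, (P q).natDegree < t)
    (c : ℕ → F) (μ : F) :
    ∑ σ : Fin (s * t), (P ((σ : ℕ) / t)).coeff ((σ : ℕ) % t) * (c ((σ : ℕ) / t) * μ ^ ((σ : ℕ) % t))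
      = ∑ q : Fin s, c q * (P q).eval μ := by
  rw [← Equiv.sum_comp finProdFinEquiv, Fintype.sum_prod_type]
  refine Finset.sum_congr rfl fun q _ => ?_
  rw [Polynomial.eval_eq_sum_range' (hP q q.2), Finset.mul_sum, ← Fin.sum_univ_eq_sum_range
    (fun z => c q * ((P q).coeff z * μ ^ z))]
  refine Finset.sum_congr rfl fun z _ => ?_
  have hz := z.2
  have h1 : ((z : ℕ) + t * (q : ℕ)) / t = q := by
    rw [Nat.add_mul_div_left _ _ (by omega), Nat.div_eq_of_lt hz, zero_add]
  have h2 : ((z : ℕ) + t * (q : ℕ)) % t = z := by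
    rw [Nat.add_mul_mod_self_left, Nat.mod_eq_of_lt hz]
  simp only [finProdFinEquiv_apply_val, h1, h2]
  ring

lemma Kent_eq {F : Type*} [Field F] (lam : ℕ → F) (s b i j z : ℕ) :
    Kent lam s b i j z = Kent lam s b i j 0 * lam (b * s + j) ^ z := by
  unfold Kent
  split_ifs <;> simp

lemma enum_mem (B : Finset ℕ) (m : ℕ) (hm : m < B.card) : enum B m ∈ B := by
  unfold enum
  have h : m < (B.sort (· ≤ ·)).length := by simpa using hm
  rw [List.getD_eq_getElem _ _ h]
  exact (Finset.mem_sort (· ≤ ·)).1 (List.getElem_mem h)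

open Polynomial in
/-- The value of the row vector of polynomials `P` against column `κ` of `K_{0,B}`. -/
noncomputable def pair {F : Type*} [Field F] (lam : ℕ → F) (s : ℕ) (B : Finset ℕ)
    (P : ℕ → F[X]) (κ : ℕ) : F :=
  ∑ q : Fin s, Kent lam s (enum B (κ / s)) q (κ % s) 0 *
    (P q).eval (lam (enum B (κ / s) * s + κ % s))

open Polynomial in
lemma sum_KmatB {F : Type*} [Field F] (lam : ℕ → F) (s t : ℕ) (B : Finset ℕ)
    (P : ℕ → F[X]) (hP : ∀ q < s, (P q).natDegree < t) (κ : Fin (s * B.card)) :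
    ∑ σ : Fin (s * t), (P ((σ : ℕ) / t)).coeff ((σ : ℕ) % t) * KmatB lam s t B σ κ
      = pair lam s B P κ := by
  rw [pair, ← key_sum s t P hP (fun q => Kent lam s (enum B ((κ : ℕ) / s)) q ((κ : ℕ) % s) 0)]
  refine Finset.sum_congr rfl fun σ _ => ?_
  simp only [KmatB, Matrix.of_apply]
  rw [Kent_eq]

open Polynomial in
lemma inj_part {F : Type*} [Field F] (lam : ℕ → F) (s : ℕ) (B : Finset ℕ)
    (hKinv : (KmatB lam s B.card B).det ≠ 0)
    (P : ℕ → F[X]) (hP : ∀ q < s, (P q).natDegree < B.card)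
    (h0 : ∀ κ : Fin (s * B.card), pair lam s B P κ = 0) : ∀ q < s, P q = 0 := by
  have hz := Matrix.eq_zero_of_vecMul_eq_zero (M := KmatB lam s B.card B) hKinv
    (v := fun σ => (P ((σ : ℕ) / B.card)).coeff ((σ : ℕ) % B.card)) (by
      funext κ
      simp only [Matrix.vecMul, dotProduct]
      rw [sum_KmatB lam s B.card B P hP, h0]; rfl)
  intro q hq
  ext z
  by_cases hzv : z < B.card
  · have := congrFun hz (finProdFinEquiv (⟨q, hq⟩, ⟨z, hzv⟩))
    have h1 : (z + B.card * q) / B.card = q := by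
      rw [Nat.add_mul_div_left _ _ (by omega), Nat.div_eq_of_lt hzv, zero_add]
    have h2 : (z + B.card * q) % B.card = z := by
      rw [Nat.add_mul_mod_self_left, Nat.mod_eq_of_lt hzv]
    simpa only [finProdFinEquiv_apply_val, h1, h2, Pi.zero_apply, coeff_zero] using this
  · rw [coeff_zero]
    exact coeff_eq_zero_of_natDegree_lt (by have := hP q hq; omega)

open Polynomial in
lemma surj_part {F : Type*} [Field F] (lam : ℕ → F) (s : ℕ) (B : Finset ℕ) (hB : 0 < B.card)
    (hKinv : (KmatB lam s B.card B).det ≠ 0) (r : Fin (s * B.card) → F) :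
    ∃ P : ℕ → F[X], (∀ q, (P q).natDegree < B.card) ∧
      ∀ κ : Fin (s * B.card), pair lam s B P κ = r κ := by
  set M := KmatB lam s B.card B with hM
  set a := r ᵥ* M⁻¹ with ha
  have haM : a ᵥ* M = r := by
    rw [ha, Matrix.vecMul_vecMul, Matrix.nonsing_inv_mul _ (isUnit_iff_ne_zero.2 hKinv),
      Matrix.vecMul_one]
  let A : ℕ → F := fun m => if h : m < s * B.card then a ⟨m, h⟩ else 0
  let P : ℕ → F[X] := fun q => ∑ z ∈ Finset.range B.card, C (A (z + B.card * q)) * X ^ z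
  have hdeg : ∀ q, (P q).natDegree < B.card := by
    intro q
    have : (P q).natDegree ≤ B.card - 1 := by
      apply natDegree_sum_le_of_forall_le
      intro z hz
      have := Finset.mem_range.1 hz
      exact (natDegree_C_mul_X_pow_le _ _).trans (by omega)
    omega
  refine ⟨P, hdeg, fun κ => ?_⟩
  rw [← sum_KmatB lam s B.card B P (fun q _ => hdeg q), ← haM]
  simp only [Matrix.vecMul, dotProduct]
  refine Finset.sum_congr rfl fun σ _ => ?_
  congr 1
  have hm : (σ : ℕ) % B.card < B.card := Nat.mod_lt _ hB
  simp only [P, finset_sum_coeff, coeff_C_mul_X_pow]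
  rw [Finset.sum_eq_single ((σ : ℕ) % B.card)]
  · simp [A, Nat.mod_add_div]
  · intro z _ hz
    rw [if_neg (Ne.symm hz)]
  · intro h; exact absurd (Finset.mem_range.2 hm) h

open Polynomial in
theorem statement6 (F : Type*) [Field F] [Fintype F] (n k d s : ℕ)
    (hk : 1 ≤ k) (hkn : k < n) (hd₁ : k + 1 ≤ d) (hd₂ : d ≤ n - 1)
    (hs : s = d - k + 1) (hdiv : s ∣ n)
    (lam : ℕ → F)
    (hdist : ∀ i < n * s, ∀ j < n * s, lam i = lam j → i = j)
    (B : Finset ℕ) (hBsub : B ⊆ Finset.range s) (hBne : B.Nonempty)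
    (t : ℕ) (ht : B.card < t)
    (hKinv : (KmatB lam s B.card B).det ≠ 0) :
    ∃ E : Matrix (Fin (s * t)) (Fin (s * t)) F,
      (∀ (ρ : Fin (s * t)) (κ : Fin (s * B.card)),
        (E * KmatB lam s t B) ρ κ =
          if (ρ : ℕ) < s * B.card then
            Kent lam s (enum B ((κ : ℕ) / s)) ((ρ : ℕ) / B.card) ((κ : ℕ) % s)
              ((ρ : ℕ) % B.card)
          else 0) ∧
      (∀ i < n * s, (∀ b ∈ B, ∀ j < s, i ≠ b * s + j) →
        ∃ Fi : ℕ → ℕ → F,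
          (Matrix.of fun p q : Fin s => Fi (p : ℕ) (q : ℕ)).det ≠ 0 ∧
          ∀ (ρ : Fin (s * t)) (j : Fin s),
            (E * IkronL lam s t i) ρ j =
              if (ρ : ℕ) < s * B.card then
                (if (ρ : ℕ) / B.card = (j : ℕ) then lam i ^ ((ρ : ℕ) % B.card) else 0)
              else
                Fi (((ρ : ℕ) - s * B.card) / (t - B.card)) (j : ℕ) *
                  lam i ^ (((ρ : ℕ) - s * B.card) % (t - B.card))) := by
  classical
  have hv : 0 < B.card := hBne.card_pos
  have hsn : s ≤ n := by omega
  -- the lower-degree parts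
  have hex : ∀ p : ℕ, ∃ P : ℕ → F[X], (∀ q, (P q).natDegree < B.card) ∧
      ∀ κ : Fin (s * B.card), pair lam s B P κ =
        pair lam s B (fun q => if p = q then X ^ B.card else 0) κ := fun p =>
    surj_part lam s B hv hKinv (fun κ => pair lam s B (fun q => if p = q then X ^ B.card else 0) κ)
  choose l hldeg hlpair using hex
  let G : ℕ → ℕ → F[X] := fun p q => (if p = q then X ^ B.card else 0) - l p q
  have hGdeg : ∀ p q, (G p q).natDegree ≤ B.card := by
    intro p q
    refine (natDegree_sub_le _ _).trans (max_le ?_ (hldeg p q).le)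
    split_ifs
    · exact natDegree_X_pow_le _
    · simp
  have hGcoeff : ∀ p q, (G p q).coeff B.card = if p = q then 1 else 0 := by
    intro p q
    simp only [G, coeff_sub]
    rw [coeff_eq_zero_of_natDegree_lt (hldeg p q)]
    split_ifs <;> simp
  have hGpair : ∀ p, ∀ κ : Fin (s * B.card), pair lam s B (G p) κ = 0 := by
    intro p κ
    have := hlpair p κ
    simp only [pair] at this ⊢
    simp only [G, eval_sub, mul_sub, Finset.sum_sub_distrib]
    rw [this, sub_self]
  let P : ℕ → ℕ → F[X] := fun ρ q =>
    if ρ < s * B.card then (if ρ / B.card = q then X ^ (ρ % B.card) else 0)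
    else X ^ ((ρ - s * B.card) % (t - B.card)) * G ((ρ - s * B.card) / (t - B.card)) q
  have hPdeg : ∀ ρ q, (P ρ q).natDegree < t := by
    intro ρ q
    simp only [P]
    split_ifs
    · refine (natDegree_X_pow_le _).trans_lt ?_
      have := Nat.mod_lt ρ hv
      omega
    · simp; omega
    · refine natDegree_mul_le.trans_lt ?_
      have h1 := natDegree_X_pow_le (R := F) ((ρ - s * B.card) % (t - B.card))
      have h2 := hGdeg ((ρ - s * B.card) / (t - B.card)) q
      have h3 := Nat.mod_lt (ρ - s * B.card) (show 0 < t - B.card by omega)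
      omega
  refine ⟨Matrix.of fun ρ σ => (P ρ ((σ : ℕ) / t)).coeff ((σ : ℕ) % t), ?_, ?_⟩
  · intro ρ κ
    rw [Matrix.mul_apply]
    simp only [Matrix.of_apply]
    rw [sum_KmatB lam s t B (P ρ) (fun q _ => hPdeg ρ q)]
    split_ifs with hρ
    · have hlt : (ρ : ℕ) / B.card < s := Nat.div_lt_of_lt_mul (lt_of_lt_of_eq hρ (mul_comm _ _))
      simp only [pair, P, if_pos hρ]
      rw [Finset.sum_eq_single (⟨(ρ : ℕ) / B.card, hlt⟩ : Fin s)]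
      · rw [Kent_eq (z := (ρ : ℕ) % B.card)]
        simp
      · intro q _ hq
        rw [if_neg (fun h => hq (Fin.ext h.symm))]
        simp
      · intro h; exact absurd (Finset.mem_univ _) h
    · have := hGpair (((ρ : ℕ) - s * B.card) / (t - B.card)) κ
      simp only [pair] at this ⊢
      simp only [P, if_neg hρ, eval_mul]
      simp only [mul_left_comm _ (eval _ (X ^ _)) _]
      rw [← Finset.mul_sum, this, mul_zero]
  · intro i hi hiB
    refine ⟨fun p q => (G p q).eval (lam i), ?_, ?_⟩
    · intro hdet
      obtain ⟨u, hu0, hu⟩ := Matrix.exists_vecMul_eq_zero_iff.2 hdet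
      let H : ℕ → F[X] := fun q => ∑ p : Fin s, C (u p) * G p q
      have hHdeg : ∀ q, (H q).natDegree ≤ B.card := by
        intro q
        apply natDegree_sum_le_of_forall_le
        intro p _
        exact (natDegree_C_mul_le _ _).trans (hGdeg p q)
      have hHev : ∀ q < s, (H q).eval (lam i) = 0 := by
        intro q hq
        have := congrFun hu ⟨q, hq⟩
        simpa [Matrix.vecMul, dotProduct, H, eval_finset_sum] using this
      let h : ℕ → F[X] := fun q => H q /ₘ (X - C (lam i))
      have hHh : ∀ q < s, (X - C (lam i)) * h q = H q := fun q hq =>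
        mul_divByMonic_eq_iff_isRoot.2 (hHev q hq)
      have hhdeg : ∀ q < s, (h q).natDegree < B.card := by
        intro q _
        have h1 : (h q).natDegree = (H q).natDegree - 1 := by
          simp only [h]
          rw [natDegree_divByMonic _ (monic_X_sub_C _), natDegree_X_sub_C]
        have := hHdeg q
        omega
      have hHpair : ∀ κ : Fin (s * B.card), pair lam s B H κ = 0 := by
        intro κ
        have h1 : pair lam s B H κ = ∑ p : Fin s, u p * pair lam s B (G p) κ := by
          simp only [pair, H, eval_finset_sum, eval_mul, eval_C, Finset.mul_sum]
          rw [Finset.sum_comm]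
          refine Finset.sum_congr rfl fun p _ => Finset.sum_congr rfl fun q _ => ?_
          ring
        rw [h1]
        simp [hGpair]
      have hh0 := inj_part lam s B hKinv h hhdeg (by
        intro κ
        have hb : enum B ((κ : ℕ) / s) ∈ B := enum_mem B _ (Nat.div_lt_of_lt_mul κ.2)
        have hbs := Finset.mem_range.1 (hBsub hb)
        have hj : (κ : ℕ) % s < s := Nat.mod_lt _ (by omega)
        have hne : lam (enum B ((κ : ℕ) / s) * s + (κ : ℕ) % s) - lam i ≠ 0 := by
          intro heq
          refine hiB _ hb _ hj (hdist _ hi _ ?_ (sub_eq_zero.1 heq).symm)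
          calc enum B ((κ : ℕ) / s) * s + (κ : ℕ) % s
              < (enum B ((κ : ℕ) / s) + 1) * s := by rw [add_mul, one_mul]; omega
            _ ≤ n * s := Nat.mul_le_mul_right _ (by omega)
        have h1 : pair lam s B H κ =
            (lam (enum B ((κ : ℕ) / s) * s + (κ : ℕ) % s) - lam i) * pair lam s B h κ := by
          simp only [pair, Finset.mul_sum]
          refine Finset.sum_congr rfl fun q _ => ?_
          rw [← hHh q q.2]
          simp only [eval_mul, eval_sub, eval_X, eval_C]
          ring
        rw [hHpair κ] at h1
        exact (mul_eq_zero.1 h1.symm).resolve_left hne)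
      apply hu0
      funext q
      have h2 : (H q).coeff B.card = u q := by
        simp only [H, finset_sum_coeff, coeff_C_mul, hGcoeff]
        simp [Fin.val_inj]
      rw [← h2, ← hHh q q.2, hh0 q q.2]
      simp
    · intro ρ j
      have h1 := key_sum s t (P ρ) (fun q _ => hPdeg ρ q)
        (fun q => if q = (j : ℕ) then 1 else 0) (lam i)
      have h2 : ∑ q : Fin s, (if (q : ℕ) = (j : ℕ) then (1 : F) else 0) * (P ρ q).eval (lam i)
          = (P ρ j).eval (lam i) := by
        simp [Fin.val_inj]
      rw [h2] at h1
      rw [Matrix.mul_apply]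
      simp only [Matrix.of_apply, IkronL]
      simp only [ite_mul, one_mul, zero_mul] at h1
      rw [h1]
      simp only [P]
      split_ifs <;> simp [mul_comm]
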